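/- If in addition h(x) < 0 for all x ∈ (α, β) (Case II of the paper: 𝓛g is negative on the whole interval), then: (i) g(x) > 0 for all x ∈ (α, β); (ii) the function x ↦ g(x)/ψ(x) is strictly decreasing on (α, β); and (iii) the function x ↦ g(x)/φ(x) is strictly increasing on (α, β). -/

import Mathlib

open MeasureTheory Set

/-!
Let `G x s = φ (x ⊔ s) * ψ (x ⊓ s)` be the Green kernel, so that
`g x = ∫ G x s * (-(k s * h s)) ds` is the integral of a positive function. As
`ψ (x ⊔ s) * ψ (x ⊓ s) = ψ x * ψ s`, the quotient `G x s / ψ x` equals `ψ s * (φ / ψ) (x ⊔ s)`,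
which for fixed `s` decreases in `x` because `φ / ψ` has derivative `-W / ψ ^ 2`.
Integration against the positive weight preserves this, and strictly so: between two points `x < y`
the decrease is strict for all `s` in `(x, y)`. The claim on `g / φ` is the order dual.
-/

lemma strictAntiOn_div_of_wronskian_pos {D : Set ℝ} {f f' g g' : ℝ → ℝ} (hD : Convex ℝ D)
    (hf : ∀ x ∈ D, HasDerivAt f (f' x) x) (hg : ∀ x ∈ D, HasDerivAt g (g' x) x)
    (hg₀ : ∀ x ∈ D, g x ≠ 0) (hW : ∀ x ∈ D, 0 < f x * g' x - f' x * g x) :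
    StrictAntiOn (fun x => f x / g x) D := by
  have hderiv : ∀ x ∈ D, HasDerivAt (fun x => f x / g x)
      ((f' x * g x - f x * g' x) / g x ^ 2) x :=
    fun x hx => (hf x hx).fun_div (hg x hx) (hg₀ x hx)
  refine strictAntiOn_of_deriv_neg hD
    (fun x hx => (hderiv x hx).continuousAt.continuousWithinAt) fun x hx => ?_
  have hxD : x ∈ D := interior_subset hx
  rw [(hderiv x hxD).deriv]
  exact div_neg_of_neg_of_pos (by linarith [hW x hxD]) (sq_pos_of_ne_zero (hg₀ x hxD))

section GreenKernel

variable {X : Type*} [LinearOrder X] {φ ψ : X → ℝ} {x s : X}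

/-- The Green kernel `G x s` of a second-order differential operator with decreasing and increasing
positive null solutions `φ` and `ψ`, without the weight `k s` that normalizes it by the
Wronskian. -/
def greenKernel (φ ψ : X → ℝ) (x s : X) : ℝ := φ (x ⊔ s) * ψ (x ⊓ s)

lemma greenKernel_of_le (h : s ≤ x) : greenKernel φ ψ x s = φ x * ψ s := by
  rw [greenKernel, sup_eq_left.2 h, inf_eq_right.2 h]

lemma greenKernel_of_ge (h : x ≤ s) : greenKernel φ ψ x s = ψ x * φ s := by
  rw [greenKernel, sup_eq_right.2 h, inf_eq_left.2 h, mul_comm]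

lemma greenKernel_pos {I : Set X} (hφ : ∀ x ∈ I, 0 < φ x) (hψ : ∀ x ∈ I, 0 < ψ x)
    (hx : x ∈ I) (hs : s ∈ I) : 0 < greenKernel φ ψ x s :=
  mul_pos (hφ _ (sup_ind x s hx hs)) (hψ _ (inf_ind x s hx hs))

lemma greenKernel_div_right (hx : ψ x ≠ 0) (hs : ψ s ≠ 0) :
    greenKernel φ ψ x s / ψ x = ψ s * (φ (x ⊔ s) / ψ (x ⊔ s)) := by
  rcases le_total s x with h | h
  · rw [greenKernel_of_le h, sup_eq_left.2 h]
    ring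
  · rw [greenKernel_of_ge h, sup_eq_right.2 h, mul_div_cancel_left₀ _ hx, mul_div_cancel₀ _ hs]

lemma greenKernel_mul_eq_piecewise (w : X → ℝ) (x : X) :
    (fun s => greenKernel φ ψ x s * w s) =
      (Iic x).piecewise (fun s => φ x * (ψ s * w s)) (fun s => ψ x * (φ s * w s)) := by
  funext s
  rcases le_or_gt s x with h | h
  · rw [piecewise_eq_of_mem _ _ _ (mem_Iic.2 h), greenKernel_of_le h, mul_assoc]
  · rw [piecewise_eq_of_notMem _ _ _ (notMem_Iic.2 h), greenKernel_of_ge h.le, mul_assoc]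

end GreenKernel

section GreenRepresentation

variable {X : Type*} [LinearOrder X] [TopologicalSpace X] [OrderClosedTopology X]
  [MeasurableSpace X] [OpensMeasurableSpace X] {μ : Measure X} {φ ψ w : X → ℝ}

lemma integrable_greenKernel_mul (hφw : Integrable (fun s => φ s * w s) μ)
    (hψw : Integrable (fun s => ψ s * w s) μ) (x : X) :
    Integrable (fun s => greenKernel φ ψ x s * w s) μ := by
  rw [greenKernel_mul_eq_piecewise]
  exact Integrable.piecewise measurableSet_Iic (hψw.const_mul _).integrableOn
    (hφw.const_mul _).integrableOn

lemma integral_greenKernel_mul [NullSingletonClass μ] (hφw : Integrable (fun s => φ s * w s) μ)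
    (hψw : Integrable (fun s => ψ s * w s) μ) (x : X) :
    ∫ s, greenKernel φ ψ x s * w s ∂μ =
      φ x * (∫ s in Iio x, ψ s * w s ∂μ) + ψ x * ∫ s in Ioi x, φ s * w s ∂μ := by
  rw [greenKernel_mul_eq_piecewise, integral_piecewise measurableSet_Iic
    (hψw.const_mul _).integrableOn (hφw.const_mul _).integrableOn, compl_Iic,
    integral_const_mul, integral_const_mul, restrict_Iio_eq_restrict_Iic]

end GreenRepresentation

lemma setIntegral_lt_setIntegral_of_lt_on_isOpen {X : Type*} [TopologicalSpace X]
    [MeasurableSpace X] {μ : Measure X} [μ.IsOpenPosMeasure] {I U : Set X} {f g : X → ℝ}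
    (hI : MeasurableSet I) (hU : IsOpen U) (hU₀ : U.Nonempty) (hUI : U ⊆ I)
    (hf : IntegrableOn f I μ) (hg : IntegrableOn g I μ)
    (hle : ∀ s ∈ I, f s ≤ g s) (hlt : ∀ s ∈ U, f s < g s) :
    ∫ s in I, f s ∂μ < ∫ s in I, g s ∂μ := by
  rw [← sub_pos, ← integral_sub hg hf, setIntegral_pos_iff_support_of_nonneg_ae
    (ae_restrict_of_forall_mem hI fun s hs => sub_nonneg.2 (hle s hs)) (hg.sub hf)]
  exact (hU.measure_pos μ hU₀).trans_le
    (measure_mono fun s hs => ⟨(sub_pos.2 (hlt s hs)).ne', hUI hs⟩)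

section GreenMonotonicity

variable {X : Type*} [LinearOrder X] [DenselyOrdered X] [TopologicalSpace X]
  [OrderClosedTopology X] [MeasurableSpace X] {μ : Measure X} [μ.IsOpenPosMeasure]
  {I : Set X} {φ ψ w : X → ℝ}

lemma setIntegral_greenKernel_mul_pos (hI : MeasurableSet I) (hIc : I.OrdConnected)
    (hI₀ : I.Nontrivial) (hφ : ∀ x ∈ I, 0 < φ x) (hψ : ∀ x ∈ I, 0 < ψ x)
    (hw : ∀ s ∈ I, 0 < w s) {x : X} (hx : x ∈ I)
    (hint : IntegrableOn (fun s => greenKernel φ ψ x s * w s) I μ) :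
    0 < ∫ s in I, greenKernel φ ψ x s * w s ∂μ := by
  obtain ⟨a, ha, b, hb, hab⟩ := hI₀.exists_lt
  have hpos : ∀ s ∈ I, 0 < greenKernel φ ψ x s * w s :=
    fun s hs => mul_pos (greenKernel_pos hφ hψ hx hs) (hw s hs)
  have hsub : Ioo a b ⊆ I := Ioo_subset_Icc_self.trans (hIc.out ha hb)
  simpa only [integral_zero] using setIntegral_lt_setIntegral_of_lt_on_isOpen hI isOpen_Ioo
    (nonempty_Ioo.2 hab) hsub integrableOn_zero hint (fun s hs => (hpos s hs).le)
    fun s hs => hpos s (hsub hs)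

lemma strictAntiOn_setIntegral_greenKernel_div (hI : MeasurableSet I) (hIc : I.OrdConnected)
    (hψ : ∀ x ∈ I, 0 < ψ x) (hanti : StrictAntiOn (fun x => φ x / ψ x) I)
    (hw : ∀ s ∈ I, 0 < w s)
    (hint : ∀ x ∈ I, IntegrableOn (fun s => greenKernel φ ψ x s * w s) I μ) :
    StrictAntiOn (fun x => (∫ s in I, greenKernel φ ψ x s * w s ∂μ) / ψ x) I := by
  intro x hx y hy hxy
  have hsub : Ioo x y ⊆ I := Ioo_subset_Icc_self.trans (hIc.out hx hy)
  have hkernel : ∀ z ∈ I, ∀ s ∈ I, greenKernel φ ψ z s * w s / ψ z =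
      ψ s * w s * (φ (z ⊔ s) / ψ (z ⊔ s)) := fun z hz s hs => by
    rw [mul_div_right_comm, greenKernel_div_right (hψ z hz).ne' (hψ s hs).ne', mul_right_comm]
  have hψw : ∀ s ∈ I, 0 < ψ s * w s := fun s hs => mul_pos (hψ s hs) (hw s hs)
  simp only [← integral_div]
  refine setIntegral_lt_setIntegral_of_lt_on_isOpen hI isOpen_Ioo (nonempty_Ioo.2 hxy) hsub
    ((hint y hy).div_const _) ((hint x hx).div_const _) (fun s hs => ?_) fun s hs => ?_
  · rw [hkernel x hx s hs, hkernel y hy s hs]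
    exact mul_le_mul_of_nonneg_left (hanti.antitoneOn (sup_ind x s hx hs) (sup_ind y s hy hs)
      (sup_le_sup_right hxy.le s)) (hψw s hs).le
  · rw [hkernel x hx s (hsub hs), hkernel y hy s (hsub hs), sup_eq_right.2 hs.1.le,
      sup_eq_left.2 hs.2.le]
    exact mul_lt_mul_of_pos_left (hanti (hsub hs) hy hs.2) (hψw s (hsub hs))

lemma strictMonoOn_setIntegral_greenKernel_div (hI : MeasurableSet I) (hIc : I.OrdConnected)
    (hφ : ∀ x ∈ I, 0 < φ x) (hmono : StrictMonoOn (fun x => ψ x / φ x) I)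
    (hw : ∀ s ∈ I, 0 < w s)
    (hint : ∀ x ∈ I, IntegrableOn (fun s => greenKernel φ ψ x s * w s) I μ) :
    StrictMonoOn (fun x => (∫ s in I, greenKernel φ ψ x s * w s ∂μ) / φ x) I := by
  -- Reversing the order of `X` exchanges the roles of `φ` and `ψ`.
  have : @Measure.IsOpenPosMeasure Xᵒᵈ _ _ μ := ‹μ.IsOpenPosMeasure›
  have hcomm : ∀ x s : X, greenKernel φ ψ x s = greenKernel (X := Xᵒᵈ) ψ φ x s :=
    fun _ _ => mul_comm _ _
  simp only [hcomm] at hint ⊢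
  exact (strictAntiOn_setIntegral_greenKernel_div (X := Xᵒᵈ) hI hIc.dual hφ
    (fun x hx y hy hxy => hmono hy hx hxy) hw hint).dual_left

end GreenMonotonicity

/-- The weight `w` stands for the product `k * h`. -/
theorem stmt_2_general {X : Type*} [LinearOrder X] [DenselyOrdered X] [TopologicalSpace X]
    [OrderClosedTopology X] [MeasurableSpace X] [OpensMeasurableSpace X]
    {μ : Measure X} [μ.IsOpenPosMeasure] [NullSingletonClass μ] {I : Set X}
    (hI : MeasurableSet I) (hIc : I.OrdConnected) (hI₀ : I.Nontrivial) {φ ψ w g : X → ℝ}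
    (hφ : ∀ x ∈ I, 0 < φ x) (hψ : ∀ x ∈ I, 0 < ψ x)
    (hanti : StrictAntiOn (fun x => φ x / ψ x) I)
    (hφw : IntegrableOn (fun s => φ s * w s) I μ) (hψw : IntegrableOn (fun s => ψ s * w s) I μ)
    (hg : ∀ x ∈ I, g x = -(φ x * (∫ s in Iio x ∩ I, ψ s * w s ∂μ) +
      ψ x * (∫ s in Ioi x ∩ I, φ s * w s ∂μ)))
    (hw : ∀ x ∈ I, w x < 0) :
    (∀ x ∈ I, 0 < g x) ∧
    StrictAntiOn (fun x => g x / ψ x) I ∧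
    StrictMonoOn (fun x => g x / φ x) I := by
  have hrepr : ∀ x ∈ I, ∫ s in I, greenKernel φ ψ x s * -w s ∂μ = g x := fun x hx => by
    simp only [mul_neg]
    rw [integral_neg, integral_greenKernel_mul hφw hψw, hg x hx,
      Measure.restrict_restrict measurableSet_Iio, Measure.restrict_restrict measurableSet_Ioi]
  have hint : ∀ x ∈ I, IntegrableOn (fun s => greenKernel φ ψ x s * -w s) I μ := fun x _ => by
    simpa only [IntegrableOn, mul_neg, Pi.neg_def] using
      (integrable_greenKernel_mul hφw hψw x).neg
  have hmono : StrictMonoOn (fun x => ψ x / φ x) I := fun x hx y hy hxy => by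
    simpa only [one_div_div] using
      one_div_lt_one_div_of_lt (div_pos (hφ y hy) (hψ y hy)) (hanti hx hy hxy)
  have hw' : ∀ s ∈ I, 0 < -w s := fun s hs => neg_pos.2 (hw s hs)
  exact ⟨fun x hx => hrepr x hx ▸
      setIntegral_greenKernel_mul_pos hI hIc hI₀ hφ hψ hw' hx (hint x hx),
    (strictAntiOn_setIntegral_greenKernel_div hI hIc hψ hanti hw' hint).congr
      fun x hx => congrArg (· / ψ x) (hrepr x hx),
    (strictMonoOn_setIntegral_greenKernel_div hI hIc hφ hmono hw' hint).congr
      fun x hx => congrArg (· / φ x) (hrepr x hx)⟩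

/-- Case II: if `𝓛g` has negative density on the whole interval then `g > 0`,
`g/ψ` is strictly decreasing and `g/φ` is strictly increasing. -/
theorem stmt_2
    (α β : ℝ) (hαβ : α < β)
    (φ ψ φ' ψ' k h g : ℝ → ℝ)
    (hφd : ∀ x ∈ Ioo α β, HasDerivAt φ (φ' x) x)
    (hψd : ∀ x ∈ Ioo α β, HasDerivAt ψ (ψ' x) x)
    (hφpos : ∀ x ∈ Ioo α β, 0 < φ x)
    (hφ'neg : ∀ x ∈ Ioo α β, φ' x < 0)
    (hψpos : ∀ x ∈ Ioo α β, 0 < ψ x)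
    (hψ'pos : ∀ x ∈ Ioo α β, 0 < ψ' x)
    (hk : ContinuousOn k (Ioo α β))
    (hkpos : ∀ x ∈ Ioo α β, 0 < k x)
    (hh : ContinuousOn h (Ioo α β))
    (hΦh : IntegrableOn (fun s => φ s * k s * h s) (Ioo α β))
    (hΨh : IntegrableOn (fun s => ψ s * k s * h s) (Ioo α β))
    (hg : ∀ x ∈ Ioo α β, g x =
      -(φ x * (∫ s in Ioo α x, ψ s * k s * h s) +
        ψ x * (∫ s in Ioo x β, φ s * k s * h s)))
    (hnegh : ∀ x ∈ Ioo α β, h x < 0) :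
    (∀ x ∈ Ioo α β, 0 < g x) ∧
    StrictAntiOn (fun x => g x / ψ x) (Ioo α β) ∧
    StrictMonoOn (fun x => g x / φ x) (Ioo α β) := by
  have hanti : StrictAntiOn (fun x => φ x / ψ x) (Ioo α β) :=
    strictAntiOn_div_of_wronskian_pos (convex_Ioo α β) hφd hψd (fun x hx => (hψpos x hx).ne')
      fun x hx => by
        linarith [mul_pos (hφpos x hx) (hψ'pos x hx),
          mul_neg_of_neg_of_pos (hφ'neg x hx) (hψpos x hx)]
  simp only [mul_assoc] at hΦh hΨh hg
  refine stmt_2_general measurableSet_Ioo ordConnected_Ioo (Ioo_infinite hαβ).nontrivial hφpos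
    hψpos hanti hΦh hΨh (fun x hx => ?_) fun x hx => mul_neg_of_pos_of_neg (hkpos x hx) (hnegh x hx)
  rw [hg x hx, Iio_inter_Ioo, Ioi_inter_Ioo, min_eq_left hx.2.le, max_eq_left hx.1.le]
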